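/- arXiv:2107.02866 — 3 statements merged into one kernel-verified Lean document; each statement's English description precedes it below -/
import Mathlib

section
/- Let b and eps be real numbers with b >= 2 and 0 < eps < 1/2, and set c = 1 / (b * sqrt(eps)). Then for every natural number k >= 1, eps^k * (sum over i from 1 to k of c^i / i!) < exp(-1). -/
/-- With `b ≥ 2`, `0 < eps < 1/2` and `c = 1/(b * sqrt eps)`, for every `k ≥ 1`,
`eps^k * ∑_{i=1}^{k} c^i / i! < exp(-1)`. -/
theorem stmt_9 (b eps : ℝ) (hb : 2 ≤ b) (heps0 : 0 < eps) (heps1 : eps < 1 / 2)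
    (c : ℝ) (hc : c = 1 / (b * Real.sqrt eps)) (k : ℕ) (hk : 1 ≤ k) :
    eps ^ k * ∑ i ∈ Finset.Icc 1 k, c ^ i / (Nat.factorial i : ℝ) < Real.exp (-1) := by
  have hs : 0 < Real.sqrt eps := Real.sqrt_pos.mpr heps0
  have hss : Real.sqrt eps * Real.sqrt eps = eps := Real.mul_self_sqrt heps0.le
  have hs1 : Real.sqrt eps ≤ 0.72 := by
    rw [Real.sqrt_le_left (by norm_num)]
    norm_num
    linarith
  have hbp : 0 < b := by linarith
  have hc0 : 0 < c := by rw [hc]; positivity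
  have hx : eps * c = Real.sqrt eps / b := by
    rw [hc]
    field_simp
    nlinarith
  have hx0 : 0 ≤ eps * c := by positivity
  have hx1 : eps * c ≤ 0.36 := by
    rw [hx, div_le_iff₀ hbp]
    nlinarith
  have key : eps ^ k * ∑ i ∈ Finset.Icc 1 k, c ^ i / (Nat.factorial i : ℝ) ≤ 0.36 := by
    induction k, hk using Nat.le_induction with
    | base => simpa using hx1
    | succ n hn ih =>
      rw [Finset.sum_Icc_succ_top (by omega), mul_add]
      have h1 : eps ^ (n + 1) * (c ^ (n + 1) / (Nat.factorial (n + 1) : ℝ)) ≤ 0.36 ^ 2 := by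
        rw [← mul_div_assoc, ← mul_pow]
        have hf : (1 : ℝ) ≤ (Nat.factorial (n + 1) : ℝ) := by
          exact_mod_cast Nat.factorial_pos (n + 1)
        calc (eps * c) ^ (n + 1) / (Nat.factorial (n + 1) : ℝ)
            ≤ (eps * c) ^ (n + 1) := div_le_self (by positivity) hf
          _ ≤ (eps * c) ^ 2 := pow_le_pow_of_le_one hx0 (by linarith) (by omega)
          _ ≤ 0.36 ^ 2 := by gcongr
      have h2 : eps ^ (n + 1) * ∑ i ∈ Finset.Icc 1 n, c ^ i / (Nat.factorial i : ℝ)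
          ≤ (1 / 2) * 0.36 := by
        rw [pow_succ', mul_assoc]
        exact mul_le_mul heps1.le ih (by positivity) (by norm_num)
      norm_num at h1 h2 ⊢
      linarith
  have := Real.exp_neg_one_gt_d9
  norm_num at key this ⊢
  linarith
end

section
/- Let eps and b be real numbers with 0 < eps < 1 and b > 1. Then the infinite series whose k-th term (for k >= 1) is (k / b^k) * eps^(k/2) * log(1/eps^k) converges and its sum is strictly less than b / (b - 1)^2, where log denotes the natural logarithm and eps^(k/2) is the real power sqrt(eps)^k. -/
lemma aux_bound (x : ℝ) (hx : 0 < x) : x * Real.log (1 / x ^ 2) < 1 := by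
  have h1 := Real.log_le_sub_one_of_pos (x := 1 / x / Real.exp 1) (by positivity)
  rw [Real.log_div (by positivity) (by positivity), Real.log_exp] at h1
  have he : (2:ℝ) < Real.exp 1 := by linarith [Real.exp_one_gt_d9]
  have h2 : Real.log (1 / x ^ 2) = 2 * Real.log (1 / x) := by
    rw [← one_div_pow, Real.log_pow]; norm_num
  have h3 : Real.log (1 / x) ≤ 1 / x / Real.exp 1 := by linarith
  rw [h2]
  calc x * (2 * Real.log (1 / x)) ≤ x * (2 * (1 / x / Real.exp 1)) := by gcongr
    _ = 2 / Real.exp 1 := by field_simp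
    _ < 1 := by rw [div_lt_one (by positivity)]; exact he

/-- For `0 < eps < 1` and `b > 1`, the series whose `k`-th term (for `k ≥ 1`) is
`(k / b^k) * eps^(k/2) * log(1/eps^k)` converges, with sum strictly less than
`b / (b - 1)^2`.  Here `eps^(k/2)` is `sqrt(eps)^k`. -/
theorem stmt_11 (eps b : ℝ) (heps0 : 0 < eps) (heps1 : eps < 1) (hb : 1 < b) :
    ∃ S : ℝ,
      HasSum (fun k : ℕ =>
        (((k + 1 : ℕ) : ℝ) / b ^ (k + 1)) *
          (Real.sqrt eps ^ (k + 1) * Real.log (1 / eps ^ (k + 1)))) S ∧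
      S < b / (b - 1) ^ 2 := by
  have hb0 : 0 < b := by linarith
  have hs : 0 < Real.sqrt eps := Real.sqrt_pos.2 heps0
  have hg : HasSum (fun k : ℕ => ((k + 1 : ℕ) : ℝ) / b ^ (k + 1)) (b / (b - 1) ^ 2) := by
    have h := hasSum_coe_mul_geometric_of_norm_lt_one (𝕜 := ℝ) (r := b⁻¹) (by
      rw [norm_inv, Real.norm_of_nonneg hb0.le]; exact inv_lt_one_of_one_lt₀ hb)
    have h' := (hasSum_nat_add_iff' 1).2 h
    have hb1 : b - 1 ≠ 0 := by linarith
    have e : b⁻¹ / (1 - b⁻¹) ^ 2 = b / (b - 1) ^ 2 := by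
      have : 1 - b⁻¹ = (b - 1) / b := by field_simp
      rw [this]; field_simp
    simp only [Finset.sum_range_one, Nat.cast_zero, zero_mul, sub_zero, e] at h'
    simpa only [inv_pow, div_eq_mul_inv] using h'
  have hlt : ∀ k : ℕ, (((k + 1 : ℕ) : ℝ) / b ^ (k + 1)) *
      (Real.sqrt eps ^ (k + 1) * Real.log (1 / eps ^ (k + 1)))
      < ((k + 1 : ℕ) : ℝ) / b ^ (k + 1) := by
    intro k
    have h := aux_bound (Real.sqrt eps ^ (k + 1)) (by positivity)
    rw [← pow_mul, mul_comm (k + 1) 2, pow_mul, Real.sq_sqrt heps0.le] at h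
    exact mul_lt_of_lt_one_right (by positivity) h
  have hnn : ∀ k : ℕ, 0 ≤ (((k + 1 : ℕ) : ℝ) / b ^ (k + 1)) *
      (Real.sqrt eps ^ (k + 1) * Real.log (1 / eps ^ (k + 1))) := by
    intro k
    have : 0 ≤ Real.log (1 / eps ^ (k + 1)) := by
      apply Real.log_nonneg
      rw [le_div_iff₀ (by positivity), one_mul]
      exact pow_le_one₀ heps0.le heps1.le
    positivity
  have hsum := Summable.of_nonneg_of_le hnn (fun k => (hlt k).le) hg.summable
  exact ⟨_, hsum.hasSum, hasSum_lt (fun k => (hlt k).le) (hlt 0) hsum.hasSum hg⟩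
end

section
/- For all natural numbers m and n, (m * (2^n - 1)) / 2^n = (m / 2^n) * (2^n - 1) + (m % 2^n) - (if m % 2^n = 0 then 0 else 1), where / denotes truncated natural-number division, % denotes the remainder, and - denotes truncated natural-number subtraction. -/
theorem stmt_13_aux (d q r : ℕ) (hr : r < d + 1) :
    (((d + 1) * q + r) * d) / (d + 1) = q * d + r - (if r = 0 then 0 else 1) := by
  rcases r with _ | s
  · have : ((d + 1) * q + 0) * d = (d + 1) * (q * d) := by ring
    rw [this, Nat.mul_div_cancel_left _ (Nat.succ_pos d)]
    simp
  · obtain ⟨t, rfl⟩ : ∃ t, d = s + t := ⟨d - s, by omega⟩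
    have : ((s + t + 1) * q + (s + 1)) * (s + t) = t + (s + t + 1) * (q * (s + t) + s) := by ring
    rw [this, Nat.add_mul_div_left _ _ (Nat.succ_pos _), Nat.div_eq_of_lt (by omega)]
    simp

/-- Integer identity behind the integer-only arithmetic coding:
`(m * (2^n - 1)) / 2^n = (m / 2^n) * (2^n - 1) + (m % 2^n) - [m % 2^n ≠ 0]`,
in truncated natural-number arithmetic. -/
theorem stmt_13 (m n : ℕ) :
    (m * (2 ^ n - 1)) / 2 ^ n =
      (m / 2 ^ n) * (2 ^ n - 1) + (m % 2 ^ n) - (if m % 2 ^ n = 0 then 0 else 1) := by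
  have hk : 0 < 2 ^ n := by positivity
  generalize 2 ^ n = k at hk ⊢
  obtain ⟨d, rfl⟩ : ∃ d, k = d + 1 := ⟨k - 1, by omega⟩
  have h := stmt_13_aux d (m / (d + 1)) (m % (d + 1)) (Nat.mod_lt _ hk)
  rw [Nat.div_add_mod] at h
  simpa only [Nat.add_sub_cancel] using h
end
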